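/- Let M be a D-factored finite MDP whose initial distribution factorizes, d1(s) = ∏_{d=1}^D d1^d(z_d), let π_b be a factored policy, and let sub-policies π_e^d satisfy per-factor absolute continuity. Then factor rewards and importance weights of distinct factors are uncorrelated under the behaviour trajectory distribution: for all d ≠ d' and all 0 ≤ t, t' ≤ T−1, Cov_{P^τ_{π_b}}( r_d(z^d_t, a^d_t), ρ^{d'}_{0:t'} ) = 0. -/

import Mathlib

open scoped BigOperators Classical

/-- A `T`-step trajectory: states `s_0, …, s_T` and actions `a_0, …, a_{T-1}`. -/
abbrev Traj (S A : Type) (T : ℕ) := (Fin (T + 1) → S) × (Fin T → A)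

/-- Probability of the trajectory `τ` under initial distribution `d1`, transition kernel
`p` and policy `π`: `P_π(τ) = d1(s_0) ∏_{t=0}^{T-1} π(a_t|s_t) p(s_{t+1}|s_t,a_t)`. -/
def trajP {S A : Type} [Fintype S] [Fintype A] (T : ℕ)
    (d1 : S → ℝ) (p : S → A → S → ℝ) (π : S → A → ℝ) (τ : Traj S A T) : ℝ :=
  d1 (τ.1 0) *
    ∏ t : Fin T, π (τ.1 t.castSucc) (τ.2 t) * p (τ.1 t.castSucc) (τ.2 t) (τ.1 t.succ)

/-- The factor importance weight `ρ^d_{0:t}(τ)`: the product over `t' ≤ t` of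
`π_e^d(a^d_{t'}|z^d_{t'}) / π_b^d(a^d_{t'}|z^d_{t'})` on trajectories of positive
behaviour probability, and `0` otherwise. -/
noncomputable def rhoFac {D : ℕ} {Z Act : Fin D → Type}
    [∀ d, Fintype (Z d)] [∀ d, Fintype (Act d)] (T : ℕ)
    (d1 : (∀ d, Z d) → ℝ) (p : (∀ d, Z d) → (∀ d, Act d) → (∀ d, Z d) → ℝ)
    (πb : (∀ d, Z d) → (∀ d, Act d) → ℝ)
    (πbd πed : ∀ d, Z d → Act d → ℝ)
    (d : Fin D) (t : Fin T) (τ : Traj (∀ d, Z d) (∀ d, Act d) T) : ℝ :=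
  if 0 < trajP T d1 p πb τ then
    ∏ t' ∈ Finset.Iic t,
      πed d (τ.1 t'.castSucc d) (τ.2 t' d) / πbd d (τ.1 t'.castSucc d) (τ.2 t' d)
  else 0

/-!
Since the initial distribution, the kernel and the behaviour policy all factorize, the probability
of a trajectory is the product over the factors `i` of the probability of its `i`-th component
(`trajP_factor`). Under the bijection `trajEquiv` between trajectories and families of component
trajectories, the behaviour distribution is thus a product measure, each of whose marginals has
total mass one (`sum_trajP`). A reward of factor `d` depends only on the `d`-th component, and
the importance weight of factor `d'` agrees, where the trajectory probability is nonzero, with a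
function of the `d'`-th component only (`trajP_mul_rhoFac`). Functions of distinct coordinates are
uncorrelated under a product measure (`sum_prod_mul_mul`).
-/

/-- The total mass of a trajectory distribution is one. By induction on the horizon: after the
first step `(s₀, a₀)`, the rest is a trajectory with initial distribution `p s₀ a₀`. -/
theorem sum_trajP {S A : Type} [Fintype S] [Fintype A] (T : ℕ) (d1 : S → ℝ)
    (p : S → A → S → ℝ) (π : S → A → ℝ) (hd1 : ∑ s, d1 s = 1)
    (hp : ∀ s a, ∑ s', p s a s' = 1) (hπ : ∀ s, ∑ a, π s a = 1) :
    ∑ τ : Traj S A T, trajP T d1 p π τ = 1 := by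
  induction T generalizing d1 with
  | zero =>
    rw [Fintype.sum_prod_type, ← hd1, ← (Equiv.funUnique (Fin 1) S).sum_comp d1]
    simp [trajP]
  | succ T ih =>
    have step : ∀ (s : S) (a : A) (σ : Fin (T + 1) → S) (α : Fin T → A),
        trajP (T + 1) d1 p π (Fin.cons s σ, Fin.cons a α)
          = d1 s * (π s a * trajP T (p s a) p π (σ, α)) := by
      intro s a σ α
      simp only [trajP, Fin.prod_univ_succ (n := T), Fin.castSucc_zero, Fin.cons_zero,
        Fin.cons_succ, ← Fin.succ_castSucc]
      ring
    rw [Fintype.sum_prod_type, ← (Fin.consEquiv fun _ : Fin (T + 2) => S).sum_comp,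
      Fintype.sum_prod_type]
    have inner : ∀ s : S, ∑ σ : Fin (T + 1) → S, ∑ α : Fin (T + 1) → A,
        trajP (T + 1) d1 p π (Fin.cons s σ, α) = d1 s := by
      intro s
      calc ∑ σ : Fin (T + 1) → S, ∑ α : Fin (T + 1) → A,
            trajP (T + 1) d1 p π (Fin.cons s σ, α)
          = ∑ σ : Fin (T + 1) → S, ∑ a : A, ∑ α : Fin T → A,
              d1 s * (π s a * trajP T (p s a) p π (σ, α)) := by
            refine Finset.sum_congr rfl fun σ _ => ?_
            rw [← (Fin.consEquiv fun _ : Fin (T + 1) => A).sum_comp, Fintype.sum_prod_type]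
            exact Finset.sum_congr rfl fun a _ => Finset.sum_congr rfl fun α _ => step s a σ α
        _ = ∑ a : A, d1 s * (π s a * ∑ τ : Traj S A T, trajP T (p s a) p π τ) := by
            rw [Finset.sum_comm]
            refine Finset.sum_congr rfl fun a _ => ?_
            simp only [Fintype.sum_prod_type, Finset.mul_sum]
        _ = d1 s := by
            simp only [ih _ (hp s _), mul_one, ← Finset.mul_sum, hπ]
    rw [← hd1]
    exact Finset.sum_congr rfl fun s _ => inner s

/-- Under a product of normalized weights, the expectation of a product of functions of two
distinct coordinates is the product of the marginal expectations. -/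
theorem sum_prod_mul_mul {ι : Type} [Fintype ι] [DecidableEq ι] {Ω : ι → Type}
    [∀ i, Fintype (Ω i)] (w : ∀ i, Ω i → ℝ) (hw : ∀ i, ∑ x, w i x = 1)
    {i j : ι} (hij : i ≠ j) (f : Ω i → ℝ) (g : Ω j → ℝ) :
    ∑ ω : ∀ k, Ω k, (∏ k, w k (ω k)) * (f (ω i) * g (ω j))
      = (∑ x, w i x * f x) * ∑ x, w j x * g x := by
  -- `h` is `f` at coordinate `i`, `g` at coordinate `j`, and `1` elsewhere.
  let h : ∀ k, Ω k → ℝ := Function.update (Function.update (fun _ _ => 1) i f) j g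
  have hi : h i = f := by simp [h, hij]
  have hj : h j = g := by simp [h]
  have hk : ∀ k, k ≠ i ∧ k ≠ j → h k = fun _ => 1 := fun k hk => by simp [h, hk.1, hk.2]
  calc ∑ ω : ∀ k, Ω k, (∏ k, w k (ω k)) * (f (ω i) * g (ω j))
      = ∑ ω : ∀ k, Ω k, ∏ k, w k (ω k) * h k (ω k) := by
        refine Finset.sum_congr rfl fun ω _ => ?_
        rw [Finset.prod_mul_distrib,
          Fintype.prod_eq_mul (f := fun k => h k (ω k)) i j hij fun k h' => by rw [hk k h'],
          hi, hj]
    _ = ∏ k, ∑ x, w k x * h k x := (Fintype.prod_sum fun k x => w k x * h k x).symm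
    _ = _ := by
        rw [Fintype.prod_eq_mul i j hij fun k h' => by simp [hk k h', hw], hi, hj]

/-- A trajectory of the product MDP is the same as a family of trajectories of its factors. -/
def trajEquiv {D : ℕ} (Z Act : Fin D → Type) (T : ℕ) :
    Traj (∀ d, Z d) (∀ d, Act d) T ≃ ∀ d, Traj (Z d) (Act d) T where
  toFun τ d := (fun t => τ.1 t d, fun t => τ.2 t d)
  invFun ω := (fun t d => (ω d).1 t, fun t d => (ω d).2 t)
  left_inv _ := rfl
  right_inv _ := rfl

theorem trajP_factor {D : ℕ} {Z Act : Fin D → Type}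
    [∀ d, Fintype (Z d)] [∀ d, Fintype (Act d)] (T : ℕ)
    {d1 : (∀ d, Z d) → ℝ} {d1d : ∀ d, Z d → ℝ} (hd1 : ∀ s, d1 s = ∏ d, d1d d (s d))
    {p : (∀ d, Z d) → (∀ d, Act d) → (∀ d, Z d) → ℝ} {pd : ∀ d, Z d → Act d → Z d → ℝ}
    (hp : ∀ s a s', p s a s' = ∏ d, pd d (s d) (a d) (s' d))
    {π : (∀ d, Z d) → (∀ d, Act d) → ℝ} {πd : ∀ d, Z d → Act d → ℝ}
    (hπ : ∀ s a, π s a = ∏ d, πd d (s d) (a d)) (τ : Traj (∀ d, Z d) (∀ d, Act d) T) :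
    trajP T d1 p π τ = ∏ d, trajP T (d1d d) (pd d) (πd d) (trajEquiv Z Act T τ d) := by
  simp only [trajP, trajEquiv, Equiv.coe_fn_mk, hd1, hp, hπ, Finset.prod_mul_distrib]
  rw [Finset.prod_comm (s := (Finset.univ : Finset (Fin D))),
    Finset.prod_comm (s := (Finset.univ : Finset (Fin D)))]

theorem trajP_nonneg {S A : Type} [Fintype S] [Fintype A] (T : ℕ) {d1 : S → ℝ}
    {p : S → A → S → ℝ} {π : S → A → ℝ} (hd1 : ∀ s, 0 ≤ d1 s)
    (hp : ∀ s a s', 0 ≤ p s a s') (hπ : ∀ s a, 0 ≤ π s a) (τ : Traj S A T) :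
    0 ≤ trajP T d1 p π τ :=
  mul_nonneg (hd1 _) (Finset.prod_nonneg fun _ _ => mul_nonneg (hπ _ _) (hp _ _ _))

/-- Weighted by the trajectory probability, the importance weight may be replaced by the bare
product of ratios: the two differ only on trajectories of probability zero. -/
theorem trajP_mul_rhoFac {D : ℕ} {Z Act : Fin D → Type}
    [∀ d, Fintype (Z d)] [∀ d, Fintype (Act d)] (T : ℕ)
    (d1 : (∀ d, Z d) → ℝ) (p : (∀ d, Z d) → (∀ d, Act d) → (∀ d, Z d) → ℝ)
    (πb : (∀ d, Z d) → (∀ d, Act d) → ℝ) (πbd πed : ∀ d, Z d → Act d → ℝ)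
    (d : Fin D) (t : Fin T) (τ : Traj (∀ d, Z d) (∀ d, Act d) T)
    (h0 : 0 ≤ trajP T d1 p πb τ) :
    trajP T d1 p πb τ * rhoFac T d1 p πb πbd πed d t τ
      = trajP T d1 p πb τ * ∏ t' ∈ Finset.Iic t,
          πed d (τ.1 t'.castSucc d) (τ.2 t' d) / πbd d (τ.1 t'.castSucc d) (τ.2 t' d) := by
  rcases h0.eq_or_lt with h | h
  · simp [← h]
  · simp [rhoFac, h]

/-- In a `D`-factored finite MDP whose initial distribution factorizes,
with a factored behaviour policy and evaluation sub-policies satisfying per-factor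
absolute continuity, factor rewards and importance weights of distinct factors are
uncorrelated under the behaviour trajectory distribution:
`Cov(r_d(z^d_t, a^d_t), ρ^{d'}_{0:t'}) = 0`. -/
theorem factor_reward_importance_weight_uncorrelated
    {D : ℕ} (Z Act : Fin D → Type)
    [∀ d, Fintype (Z d)] [∀ d, Fintype (Act d)]
    [∀ d, Nonempty (Z d)] [∀ d, Nonempty (Act d)]
    (T : ℕ)
    -- factorized initial distribution
    (d1 : (∀ d, Z d) → ℝ)
    (d1d : ∀ d, Z d → ℝ)
    (hd1d_nonneg : ∀ d z, 0 ≤ d1d d z) (hd1d_sum : ∀ d, ∑ z, d1d d z = 1)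
    (hd1 : ∀ s, d1 s = ∏ d, d1d d (s d))
    -- factorized transition kernel
    (p : (∀ d, Z d) → (∀ d, Act d) → (∀ d, Z d) → ℝ)
    (pd : ∀ d, Z d → Act d → Z d → ℝ)
    (hpd_nonneg : ∀ d z a z', 0 ≤ pd d z a z') (hpd_sum : ∀ d z a, ∑ z', pd d z a z' = 1)
    (hp : ∀ s a s', p s a s' = ∏ d, pd d (s d) (a d) (s' d))
    -- factorized reward
    (r : (∀ d, Z d) → (∀ d, Act d) → ℝ)
    (rd : ∀ d, Z d → Act d → ℝ)
    (hr : ∀ s a, r s a = ∑ d, rd d (s d) (a d))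
    -- factored behaviour policy
    (πb : (∀ d, Z d) → (∀ d, Act d) → ℝ)
    (πbd : ∀ d, Z d → Act d → ℝ)
    (hπbd_nonneg : ∀ d z a, 0 ≤ πbd d z a) (hπbd_sum : ∀ d z, ∑ a, πbd d z a = 1)
    (hπb : ∀ s a, πb s a = ∏ d, πbd d (s d) (a d))
    -- evaluation sub-policies with per-factor absolute continuity
    (πed : ∀ d, Z d → Act d → ℝ)
    (hπed_nonneg : ∀ d z a, 0 ≤ πed d z a) (hπed_sum : ∀ d z, ∑ a, πed d z a = 1)
    (habs : ∀ d z a, πbd d z a = 0 → πed d z a = 0)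
    (d d' : Fin D) (hdd' : d ≠ d') (t t' : Fin T) :
    (∑ τ : Traj (∀ d, Z d) (∀ d, Act d) T,
        trajP T d1 p πb τ *
          (rd d (τ.1 t.castSucc d) (τ.2 t d) * rhoFac T d1 p πb πbd πed d' t' τ))
      = (∑ τ : Traj (∀ d, Z d) (∀ d, Act d) T,
          trajP T d1 p πb τ * rd d (τ.1 t.castSucc d) (τ.2 t d)) *
        (∑ τ : Traj (∀ d, Z d) (∀ d, Act d) T,
          trajP T d1 p πb τ * rhoFac T d1 p πb πbd πed d' t' τ) := by
  let w : ∀ i, Traj (Z i) (Act i) T → ℝ := fun i => trajP T (d1d i) (pd i) (πbd i)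
  have hw : ∀ i, ∑ x, w i x = 1 := fun i =>
    sum_trajP T _ _ _ (hd1d_sum i) (hpd_sum i) (hπbd_sum i)
  have hP : ∀ τ, trajP T d1 p πb τ = ∏ i, w i (trajEquiv Z Act T τ i) :=
    trajP_factor T hd1 hp hπb
  have hP0 : ∀ τ, 0 ≤ trajP T d1 p πb τ := fun τ => by
    rw [hP]
    exact Finset.prod_nonneg fun i _ =>
      trajP_nonneg T (hd1d_nonneg i) (hpd_nonneg i) (hπbd_nonneg i) _
  -- The reward and the bare importance ratio as functions of single component trajectories.
  let f : Traj (Z d) (Act d) T → ℝ := fun x => rd d (x.1 t.castSucc) (x.2 t)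
  let g : Traj (Z d') (Act d') T → ℝ := fun x => ∏ s ∈ Finset.Iic t',
    πed d' (x.1 s.castSucc) (x.2 s) / πbd d' (x.1 s.castSucc) (x.2 s)
  have hρ : ∀ τ, trajP T d1 p πb τ * rhoFac T d1 p πb πbd πed d' t' τ
      = (∏ i, w i (trajEquiv Z Act T τ i)) * g (trajEquiv Z Act T τ d') := fun τ => by
    rw [trajP_mul_rhoFac T d1 p πb πbd πed d' t' τ (hP0 τ), hP]
    rfl
  have key : ∀ (u : Traj (Z d) (Act d) T → ℝ) (v : Traj (Z d') (Act d') T → ℝ),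
      ∑ τ, (∏ i, w i (trajEquiv Z Act T τ i)) *
          (u (trajEquiv Z Act T τ d) * v (trajEquiv Z Act T τ d'))
        = (∑ x, w d x * u x) * ∑ x, w d' x * v x := fun u v => by
    rw [← sum_prod_mul_mul w hw hdd' u v]
    exact (trajEquiv Z Act T).sum_comp
      fun ω => (∏ k, w k (ω k)) * (u (ω d) * v (ω d'))
  have hfg := key f g
  -- The marginal expectations are the cases where the other function is constantly one.
  have hf := key f fun _ => 1
  have hg := key (fun _ => 1) g
  simp only [mul_one, one_mul, hw] at hf hg
  calc _ = ∑ τ, (∏ i, w i (trajEquiv Z Act T τ i)) *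
          (f (trajEquiv Z Act T τ d) * g (trajEquiv Z Act T τ d')) := by
        refine Finset.sum_congr rfl fun τ _ => ?_
        rw [mul_left_comm, hρ, mul_left_comm]
        rfl
    _ = _ := by
        rw [hfg, ← hf, ← hg]
        congr 1
        · exact Finset.sum_congr rfl fun τ _ => by rw [hP]; rfl
        · exact Finset.sum_congr rfl fun τ _ => (hρ τ).symm
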